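/- Let 0 < θ < β₁ < γ₁ < π/2, and let f : Δ_{γ₁} → ℂ be holomorphic and bounded with |f(z)| ≤ c|z|^s for some constants c, s > 0, where Δ_{γ₁} = 1 - B_{γ₁} is the reflected Stolz domain. Let Γ₁ be the contour consisting of the two line segments from cos(β₁)e^{iβ₁} to 0 and from 0 to cos(β₁)e^{-iβ₁}, and Γ₂ the counterclockwise circular arc from cos(β₁)e^{-iβ₁} to cos(β₁)e^{iβ₁} along the circle of center 1 and radius sin β₁. Define F_j(z) = (1/2πi)∫_{Γ_j} f(λ)/(λ - z) dλ for j = 1,2, and g(z) = F₁(z) + F₂(0)/(1+z). Then g is holomorphic on the sector Σ_θ, there exist constants c₂, s' > 0 with |g(z)| ≤ c₂ |z|^{s'}/(1+|z|^{2s'}) for all z ∈ Σ_θ, and ‖g‖_{∞,Σ_θ} ≤ C ‖f‖_{∞,Δ_{γ₁}} for a constant C independent of f. -/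

import Mathlib

open Complex MeasureTheory intervalIntegral Real

/-- The Stolz domain of angle `γ`. -/
def stolzDomain (γ : ℝ) : Set ℂ :=
  interior (convexHull ℝ ({1} ∪ Metric.closedBall (0:ℂ) (Real.sin γ)))

/-- The reflected Stolz domain `Δ_γ = 1 - B_γ`. -/
def reflStolz (γ : ℝ) : Set ℂ := (fun z => 1 - z) '' stolzDomain γ

/-- The open sector of half-angle `θ`. -/
def sector (θ : ℝ) : Set ℂ := {z : ℂ | z ≠ 0 ∧ |z.arg| < θ}

/-- Cauchy-type integral of `f` along the straight segment from `a` to `b`,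
evaluated at `z`. -/
noncomputable def segCauchy (f : ℂ → ℂ) (a b z : ℂ) : ℂ :=
  ∫ t in (0:ℝ)..1, f ((1 - (t:ℂ)) * a + (t:ℂ) * b) /
    (((1 - (t:ℂ)) * a + (t:ℂ) * b) - z) * (b - a)

/-- `F₁(z)`: Cauchy integral along the contour `Γ₁` consisting of the segments from
`cos β · e^{iβ}` to `0` and from `0` to `cos β · e^{-iβ}`. -/
noncomputable def F₁ (β : ℝ) (f : ℂ → ℂ) (z : ℂ) : ℂ :=
  (1 / (2 * Real.pi * I)) *
    (segCauchy f ((Real.cos β : ℂ) * Complex.exp (I * β)) 0 z +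
     segCauchy f 0 ((Real.cos β : ℂ) * Complex.exp (-(I * β))) z)

/-- `F₂(z)`: Cauchy integral along the counterclockwise arc `Γ₂` from
`cos β · e^{-iβ}` to `cos β · e^{iβ}` on the circle of centre `1` and radius `sin β`. -/
noncomputable def F₂ (β : ℝ) (f : ℂ → ℂ) (z : ℂ) : ℂ :=
  (1 / (2 * Real.pi * I)) *
    ∫ t in -(Real.pi / 2 + β)..(Real.pi / 2 + β),
      f (1 + (Real.sin β : ℂ) * Complex.exp (I * t)) /
        ((1 + (Real.sin β : ℂ) * Complex.exp (I * t)) - z) *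
        (I * (Real.sin β : ℂ) * Complex.exp (I * t))

/-- The auxiliary function `g(z) = F₁(z) + F₂(0)/(1+z)`. -/
noncomputable def gAux (β : ℝ) (f : ℂ → ℂ) (z : ℂ) : ℂ :=
  F₁ β f z + F₂ β f 0 / (1 + z)

/-!
For `z` in the sector, `F₁ z` is compared with `F₁ (-|z|)`. The mirror point `-|z|` lies outside the
domain enclosed by the contour, so Cauchy's theorem gives `F₁ (-|z|) = -F₂ (-|z|)`, and `F₂` is
bounded there because `Γ₂` stays away from `0`. The difference of the two Cauchy kernels is
`O(|z| / (|x| + |z|) ^ 2)` on `Γ₁`, whose integral is bounded independently of `z`; this gives the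
uniform bound. Comparing instead with the point `0`, where `F₁ 0 = -F₂ 0` cancels against
`F₂ 0 / (1 + z)`, gives the decay at `0`, and the size `O(1 / |z|)` of the kernel itself gives the
decay at infinity.
-/

open Set Filter Topology Pointwise

theorem sin_le_sin_of_le_of_le_pi_sub {x y : ℝ} (hx : -(π / 2) ≤ x) (hxy : x ≤ y)
    (hyx : y ≤ π - x) : Real.sin x ≤ Real.sin y := by
  rw [← Real.cos_pi_div_two_sub x, ← Real.cos_pi_div_two_sub y, ← Real.cos_abs (π / 2 - y)]
  exact Real.cos_le_cos_of_nonneg_of_le_pi (abs_nonneg _) (by linarith)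
    (abs_le.2 ⟨by linarith, by linarith⟩)

theorem le_two_mul_rpow_div_one_add_rpow {x y A s : ℝ} (hx : 0 < x) (hA : 0 ≤ A) (hs₀ : 0 ≤ s)
    (hs₁ : s ≤ 1) (h_small : y ≤ A * x ^ s) (h_large : y ≤ A / x) :
    y ≤ 2 * A * x ^ s / (1 + x ^ (2 * s)) := by
  have hu : 0 < x ^ s := rpow_pos_of_pos hx s
  rw [two_mul s, rpow_add hx, ← sq, le_div_iff₀ (by positivity)]
  rcases le_total x 1 with hx1 | hx1
  · have hu1 : x ^ s ≤ 1 := rpow_le_one hx.le hx1 hs₀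
    calc y * (1 + (x ^ s) ^ 2) ≤ A * x ^ s * (1 + 1) := by
          gcongr
          exact pow_le_one₀ hu.le hu1
      _ = 2 * A * x ^ s := by ring
  · have hu1 : 1 ≤ x ^ s := one_le_rpow hx1 hs₀
    have hux : x ^ s ≤ x := rpow_le_self_of_one_le hx1 hs₁
    calc y * (1 + (x ^ s) ^ 2) ≤ A / x ^ s * ((x ^ s) ^ 2 + (x ^ s) ^ 2) := by
          gcongr
          · exact h_large.trans (by gcongr)
          · exact one_le_pow₀ hu1
      _ = 2 * A * x ^ s := by field_simp; ring

theorem div_add_le_rpow_div_rpow {a b s : ℝ} (ha : 0 ≤ a) (hb : 0 < b) (hs₀ : 0 ≤ s) (hs₁ : s ≤ 1) :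
    a / (b + a) ≤ a ^ s / b ^ s :=
  calc a / (b + a) ≤ (a / (b + a)) ^ s :=
        self_le_rpow_of_le_one (by positivity) (div_le_one_of_le₀ (by linarith) (by positivity)) hs₁
    _ ≤ (a / b) ^ s := by gcongr; linarith
    _ = a ^ s / b ^ s := div_rpow ha hb.le s

theorem norm_le_norm_add_of_inner_nonneg {E : Type*} [NormedAddCommGroup E]
    [InnerProductSpace ℝ E] {x y : E} (h : 0 ≤ inner ℝ x y) : ‖x‖ ≤ ‖x + y‖ := by
  refine le_of_sq_le_sq ?_ (norm_nonneg _)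
  rw [norm_add_sq_real]
  linarith [sq_nonneg ‖y‖]

theorem intervalIntegrable_div_mul_add_sq {r ρ : ℝ} (hr : 0 ≤ r) (hρ : 0 < ρ) :
    IntervalIntegrable (fun t : ℝ ↦ r / (t * r + ρ) ^ 2) volume 0 1 := by
  refine ContinuousOn.intervalIntegrable fun t ht ↦ ContinuousAt.continuousWithinAt ?_
  rw [uIcc_of_le zero_le_one] at ht
  have : t * r + ρ ≠ 0 := (add_pos_of_nonneg_of_pos (mul_nonneg ht.1 hr) hρ).ne'
  fun_prop (disch := positivity)

theorem integral_div_mul_add_sq_le {r ρ : ℝ} (hr : 0 ≤ r) (hρ : 0 < ρ) :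
    ∫ t in (0 : ℝ)..1, r / (t * r + ρ) ^ 2 ≤ 1 / ρ := by
  have hderiv : ∀ t ∈ uIcc (0 : ℝ) 1,
      HasDerivAt (fun t : ℝ ↦ -(t * r + ρ)⁻¹) (r / (t * r + ρ) ^ 2) t := by
    intro t ht
    rw [uIcc_of_le zero_le_one] at ht
    have hne : t * r + ρ ≠ 0 := (add_pos_of_nonneg_of_pos (mul_nonneg ht.1 hr) hρ).ne'
    simpa [neg_div] using! (((hasDerivAt_id t).mul_const r).add_const ρ).inv hne |>.neg
  rw [intervalIntegral.integral_eq_sub_of_hasDerivAt hderiv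
    (intervalIntegrable_div_mul_add_sq hr hρ)]
  have : 0 ≤ (1 * r + ρ)⁻¹ := by positivity
  simp only [zero_mul, zero_add, one_div]
  linarith

theorem differentiableAt_integral_div_sub {α : Type*} [MeasurableSpace α] {μ : Measure α}
    {φ ξ : α → ℂ} (hφ : Integrable φ μ) (hξ : AEMeasurable ξ μ) {z : ℂ} {δ : ℝ} (hδ : 0 < δ)
    (hdist : ∀ᵐ a ∂μ, δ ≤ ‖ξ a - z‖) :
    DifferentiableAt ℂ (fun w ↦ ∫ a, φ a / (ξ a - w) ∂μ) z := by
  have hdist_ball : ∀ᵐ a ∂μ, ∀ w ∈ Metric.ball z (δ / 2), δ / 2 ≤ ‖ξ a - w‖ := by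
    filter_upwards [hdist] with a ha w hw
    linarith [norm_sub_le_norm_sub_add_norm_sub (ξ a) w z, mem_ball_iff_norm.1 hw]
  have hmeas : ∀ w, AEStronglyMeasurable (fun a ↦ φ a / (ξ a - w)) μ := fun w ↦
    (hφ.aemeasurable.div (hξ.sub_const w)).aestronglyMeasurable
  have hint : Integrable (fun a ↦ φ a / (ξ a - z)) μ := by
    refine (hφ.norm.div_const δ).mono' (hmeas z) ?_
    filter_upwards [hdist] with a ha
    rw [norm_div]
    gcongr
  refine (hasDerivAt_integral_of_dominated_loc_of_deriv_le
    (F := fun w a ↦ φ a / (ξ a - w)) (F' := fun w a ↦ φ a / (ξ a - w) ^ 2)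
    (bound := fun a ↦ ‖φ a‖ / (δ / 2) ^ 2) (Metric.ball_mem_nhds z (half_pos hδ))
    (.of_forall hmeas) hint
    (hφ.aemeasurable.div ((hξ.sub_const z).pow_const 2)).aestronglyMeasurable ?_
    (hφ.norm.div_const _) ?_).2.differentiableAt
  · filter_upwards [hdist_ball] with a ha w hw
    rw [norm_div, norm_pow]
    gcongr
    exact ha w hw
  · filter_upwards [hdist_ball] with a ha w hw
    have hne : ξ a - w ≠ 0 := norm_pos_iff.1 ((half_pos hδ).trans_le (ha w hw))
    simpa [div_eq_mul_inv] using!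
      (((hasDerivAt_id w).const_sub (ξ a)).inv hne).const_mul (φ a)

section Ray

variable {h H : ℂ → ℂ} {p : ℂ} {C s : ℝ}

theorem intervalIntegrable_ray (hs : 0 < s)
    (hcont : ContinuousOn (fun t : ℝ ↦ h (t * p)) (Ioc 0 1))
    (hbound : ∀ t ∈ Ioc (0 : ℝ) 1, ‖h (t * p)‖ ≤ C * ‖(t : ℂ) * p‖ ^ (s - 1)) :
    IntervalIntegrable (fun t : ℝ ↦ h (t * p) * p) volume 0 1 := by
  have hdom : IntervalIntegrable (fun t : ℝ ↦ t ^ (s - 1) * (C * ‖p‖ ^ (s - 1) * ‖p‖))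
      volume 0 1 :=
    (intervalIntegrable_rpow' (by linarith)).mul_const _
  refine hdom.mono_fun' ?_ ?_ <;> rw [uIoc_of_le zero_le_one]
  · exact (hcont.mul continuousOn_const).aestronglyMeasurable measurableSet_Ioc
  · refine (ae_restrict_iff' measurableSet_Ioc).2 (.of_forall fun t ht ↦ ?_)
    have hnorm : ‖(t : ℂ) * p‖ = t * ‖p‖ := by
      rw [norm_mul, Complex.norm_of_nonneg ht.1.le]
    calc ‖h (t * p) * p‖ ≤ C * (t * ‖p‖) ^ (s - 1) * ‖p‖ := by
          rw [norm_mul, ← hnorm]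
          gcongr
          exact hbound t ht
      _ = t ^ (s - 1) * (C * ‖p‖ ^ (s - 1) * ‖p‖) := by
          rw [mul_rpow ht.1.le (norm_nonneg p)]
          ring

theorem tendsto_sub_comp_ray
    (hH : ∀ t ∈ Ioc (0 : ℝ) 1, HasDerivAt H (h (t * p)) (t * p))
    (hint : IntervalIntegrable (fun t : ℝ ↦ h (t * p) * p) volume 0 1) :
    Tendsto (fun ε : ℝ ↦ H p - H (ε * p)) (𝓝[>] 0) (𝓝 (∫ t in (0 : ℝ)..1, h (t * p) * p)) := by
  have hIcc : uIcc (0 : ℝ) 1 = Icc 0 1 := uIcc_of_le zero_le_one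
  have hlim : Tendsto (fun ε : ℝ ↦ ∫ t in ε..1, h (t * p) * p) (𝓝[>] 0)
      (𝓝 (∫ t in (0 : ℝ)..1, h (t * p) * p)) := by
    rw [← nhdsWithin_Ioc_eq_nhdsGT zero_lt_one]
    have hcont := continuousOn_primitive_interval_left
      (hIcc ▸ (intervalIntegrable_iff_integrableOn_Icc_of_le zero_le_one).1 hint)
    exact (hcont 0 left_mem_uIcc).tendsto.mono_left
      (nhdsWithin_mono _ (hIcc ▸ Ioc_subset_Icc_self))
  refine hlim.congr' ?_
  filter_upwards [Ioc_mem_nhdsGT (zero_lt_one' ℝ)] with ε hε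
  have hderiv : ∀ t ∈ uIcc ε 1, HasDerivAt (fun t : ℝ ↦ H (t * p)) (h (t * p) * p) t := by
    intro t ht
    rw [uIcc_of_le hε.2] at ht
    have hline : HasDerivAt (fun t : ℝ ↦ (t : ℂ) * p) p t := by
      simpa using ofRealCLM.hasDerivAt.mul_const p
    exact (hH t ⟨hε.1.trans_le ht.1, ht.2⟩).comp t hline
  rw [intervalIntegral.integral_eq_sub_of_hasDerivAt hderiv, ofReal_one, one_mul]
  refine hint.mono_set ?_
  rw [hIcc, uIcc_of_le hε.2]
  exact Icc_subset_Icc_left hε.1.le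

theorem ofReal_mul_mem_of_zero_mem_closure {U : Set ℂ} (hU_open : IsOpen U)
    (hU_convex : Convex ℝ U) (hU_zero : 0 ∈ closure U) {a : ℂ} (ha : a ∈ U) {t : ℝ}
    (ht : t ∈ Ioc (0 : ℝ) 1) : (t : ℂ) * a ∈ U := by
  have := hU_convex.combo_closure_interior_mem_interior hU_zero (hU_open.interior_eq.symm ▸ ha)
    (sub_nonneg.2 ht.2) ht.1 (sub_add_cancel 1 t)
  simpa [hU_open.interior_eq] using this

variable {U : Set ℂ}

-- After rescaling the segment to `[p, q]`, the derivative of `b ↦ H (ε * b)` is `O(ε ^ s)`.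
theorem tendsto_comp_ray_sub_comp_ray (hs : 0 < s) (hU_open : IsOpen U) (hU_convex : Convex ℝ U)
    (hU_zero : 0 ∈ closure U) (h0 : 0 ∉ U) (hH : ∀ a ∈ U, HasDerivAt H (h a) a)
    (hbound : ∀ a ∈ U, ‖h a‖ ≤ C * ‖a‖ ^ (s - 1)) {q : ℂ} (hp : p ∈ U) (hq : q ∈ U) :
    Tendsto (fun ε : ℝ ↦ H (ε * p) - H (ε * q)) (𝓝[>] 0) (𝓝 0) := by
  have hsegU : segment ℝ p q ⊆ U := hU_convex.segment_subset hp hq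
  have hcont : ContinuousOn (fun b : ℂ ↦ C * ‖b‖ ^ (s - 1)) (segment ℝ p q) := fun b hb ↦
    (continuousAt_const.mul (continuous_norm.continuousAt.rpow_const
      (.inl (norm_ne_zero_iff.2 (ne_of_mem_of_not_mem (hsegU hb) h0))))).continuousWithinAt
  have hcompact : IsCompact (segment ℝ p q) := by
    rw [← convexHull_pair]
    exact (toFinite _).isCompact_convexHull ℝ
  obtain ⟨B, hB⟩ := hcompact.exists_bound_of_continuousOn hcont
  have hlim : Tendsto (fun ε : ℝ ↦ ε ^ s * B * ‖p - q‖) (𝓝[>] 0) (𝓝 0) := by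
    have := ((continuousAt_rpow_const 0 s (.inr hs.le)).mul_const B).mul_const ‖p - q‖
    simpa [zero_rpow hs.ne'] using! this.tendsto.mono_left nhdsWithin_le_nhds
  refine squeeze_zero_norm' ?_ hlim
  filter_upwards [Ioc_mem_nhdsGT (zero_lt_one' ℝ)] with ε hε
  have hmem : ∀ b ∈ segment ℝ p q, (ε : ℂ) * b ∈ U := fun b hb ↦
    ofReal_mul_mem_of_zero_mem_closure hU_open hU_convex hU_zero (hsegU hb) hε
  refine (convex_segment p q).norm_image_sub_le_of_norm_hasDerivWithin_le
    (f := fun b ↦ H (ε * b)) (f' := fun b ↦ h (ε * b) * ε)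
    (fun b hb ↦ ((hH _ (hmem b hb)).comp b
      (by simpa using (hasDerivAt_id b).const_mul (ε : ℂ))).hasDerivWithinAt)
    (fun b hb ↦ ?_) (right_mem_segment ℝ p q) (left_mem_segment ℝ p q)
  calc ‖h (ε * b) * ε‖ ≤ C * (ε * ‖b‖) ^ (s - 1) * ε := by
        rw [norm_mul, Complex.norm_of_nonneg hε.1.le]
        gcongr
        · exact hε.1.le
        · simpa [abs_of_pos hε.1] using hbound _ (hmem b hb)
    _ = ε ^ s * (C * ‖b‖ ^ (s - 1)) := by
        rw [mul_rpow hε.1.le (norm_nonneg b), rpow_sub_one hε.1.ne']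
        field_simp [hε.1.ne']
    _ ≤ ε ^ s * B := by
        have := hε.1.le
        gcongr
        exact (le_norm_self _).trans (hB b hb)

theorem integral_ray_sub_integral_ray (hs : 0 < s) (hU_open : IsOpen U) (hU_convex : Convex ℝ U)
    (hU_zero : 0 ∈ closure U) (h0 : 0 ∉ U) (hcont : ContinuousOn h U)
    (hH : ∀ a ∈ U, HasDerivAt H (h a) a) (hbound : ∀ a ∈ U, ‖h a‖ ≤ C * ‖a‖ ^ (s - 1)) {q : ℂ}
    (hp : p ∈ U) (hq : q ∈ U) :
    (∫ t in (0 : ℝ)..1, h (t * p) * p) - (∫ t in (0 : ℝ)..1, h (t * q) * q) = H p - H q := by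
  have hray : ∀ a ∈ U, ∀ t ∈ Ioc (0 : ℝ) 1, (t : ℂ) * a ∈ U := fun a ha t ht ↦
    ofReal_mul_mem_of_zero_mem_closure hU_open hU_convex hU_zero ha ht
  have hlim : ∀ a ∈ U, Tendsto (fun ε : ℝ ↦ H a - H (ε * a)) (𝓝[>] 0)
      (𝓝 (∫ t in (0 : ℝ)..1, h (t * a) * a)) := fun a ha ↦
    tendsto_sub_comp_ray (fun t ht ↦ hH _ (hray a ha t ht)) <|
      intervalIntegrable_ray hs (hcont.comp (by fun_prop) (hray a ha))
        fun t ht ↦ hbound _ (hray a ha t ht)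
  have hsum := ((hlim p hp).sub (hlim q hq)).add
    (tendsto_comp_ray_sub_comp_ray hs hU_open hU_convex hU_zero h0 hH hbound hp hq)
  rw [add_zero] at hsum
  refine tendsto_nhds_unique hsum (tendsto_const_nhds.congr fun ε ↦ ?_)
  ring

end Ray

/-- The point `z` is quantitatively apart from the open ray through `p`: the distance from `z` to
a point `x` of the ray is at least `K⁻¹ * (‖x‖ + ‖z‖)`. This is what bounds the Cauchy kernel on
the ray in terms of `‖x‖` and `‖z‖` alone. -/
def RaySeparated (K : ℝ) (p z : ℂ) : Prop :=
  ∀ t : ℝ, 0 < t → t * ‖p‖ + ‖z‖ ≤ K * ‖(t : ℂ) * p - z‖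

namespace RaySeparated

variable {K t : ℝ} {p z : ℂ}

theorem of_mul_norm_le {σ : ℝ} (hσ : 0 < σ)
    (h : ∀ t : ℝ, 0 < t → σ * ‖z‖ ≤ ‖(t : ℂ) * p - z‖) : RaySeparated (1 + 2 / σ) p z := by
  intro t ht
  have htri : t * ‖p‖ ≤ ‖(t : ℂ) * p - z‖ + ‖z‖ := by
    simpa [abs_of_pos ht] using norm_le_norm_sub_add ((t : ℂ) * p) z
  have hz : ‖z‖ ≤ ‖(t : ℂ) * p - z‖ / σ := (le_div_iff₀' hσ).2 (h t ht)
  calc t * ‖p‖ + ‖z‖ ≤ ‖(t : ℂ) * p - z‖ + 2 * (‖(t : ℂ) * p - z‖ / σ) := by linarith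
    _ = (1 + 2 / σ) * ‖(t : ℂ) * p - z‖ := by ring

theorem norm_sub_pos (hz : RaySeparated K p z) (hp : p ≠ 0) (ht : 0 < t) :
    0 < ‖(t : ℂ) * p - z‖ := by
  have hsum : 0 < t * ‖p‖ + ‖z‖ := by positivity
  by_contra! hle
  rw [norm_le_zero_iff] at hle
  have := hz t ht
  rw [hle, norm_zero, mul_zero] at this
  linarith

theorem norm_div_sub_le (hz : RaySeparated K p z) (hp : p ≠ 0) (ht : 0 < t) (a : ℂ) :
    ‖a / (t * p - z)‖ ≤ K * ‖a‖ / (t * ‖p‖ + ‖z‖) := by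
  have hpos := hz.norm_sub_pos hp ht
  rw [norm_div, div_le_div_iff₀ hpos (by positivity)]
  calc ‖a‖ * (t * ‖p‖ + ‖z‖) ≤ ‖a‖ * (K * ‖(t : ℂ) * p - z‖) := by gcongr; exact hz t ht
    _ = K * ‖a‖ * ‖(t : ℂ) * p - z‖ := by ring

theorem nonneg (hz : RaySeparated K p z) (hp : p ≠ 0) : 0 ≤ K := by
  have hle := hz 1 one_pos
  exact nonneg_of_mul_nonneg_left ((by positivity : 0 ≤ 1 * ‖p‖ + ‖z‖).trans hle)
    (hz.norm_sub_pos hp one_pos)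

theorem norm_div_sub_mul_div_sub_le (hz : RaySeparated K p z) {w : ℂ} (hw : RaySeparated K p w)
    (hp : p ≠ 0) (ht : 0 < t) (a b : ℂ) :
    ‖a / (t * p - z) * (b / (t * p - w))‖ ≤
      K ^ 2 * ‖a‖ * ‖b‖ / ((t * ‖p‖ + ‖z‖) * (t * ‖p‖ + ‖w‖)) := by
  have hK := hz.nonneg hp
  calc ‖a / (t * p - z) * (b / (t * p - w))‖
      ≤ K * ‖a‖ / (t * ‖p‖ + ‖z‖) * (K * ‖b‖ / (t * ‖p‖ + ‖w‖)) := by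
        rw [norm_mul]
        gcongr
        · exact hz.norm_div_sub_le hp ht a
        · exact hw.norm_div_sub_le hp ht b
    _ = K ^ 2 * ‖a‖ * ‖b‖ / ((t * ‖p‖ + ‖z‖) * (t * ‖p‖ + ‖w‖)) := by
        rw [div_mul_div_comm]
        ring

end RaySeparated

section SegCauchy

variable {f : ℂ → ℂ} {p z w : ℂ} {c s K M : ℝ}

theorem segCauchy_symm (f : ℂ → ℂ) (a b z : ℂ) : segCauchy f b a z = -segCauchy f a b z := by
  have hreverse := integral_comp_sub_left (a := 0) (b := 1)
    (fun t : ℝ ↦ f ((1 - (t : ℂ)) * a + t * b) / ((1 - (t : ℂ)) * a + t * b - z) * (b - a)) 1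
  rw [sub_self, sub_zero] at hreverse
  rw [segCauchy, segCauchy, ← hreverse, ← intervalIntegral.integral_neg]
  refine intervalIntegral.integral_congr fun t _ ↦ ?_
  simp only [ofReal_sub, ofReal_one, sub_sub_cancel, add_comm ((t : ℂ) * a), ← mul_neg, neg_sub]

theorem segCauchy_zero_left (f : ℂ → ℂ) (p z : ℂ) :
    segCauchy f 0 p z = ∫ t in (0 : ℝ)..1, f (t * p) / (t * p - z) * p := by
  simp only [segCauchy, mul_zero, zero_add, sub_zero]

theorem continuousOn_div_ray_sub (hcont : ContinuousOn (fun t : ℝ ↦ f (t * p)) (Ioc 0 1))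
    (hp : p ≠ 0) (hz : RaySeparated K p z) :
    ContinuousOn (fun t : ℝ ↦ f (t * p) / (t * p - z)) (Ioc 0 1) :=
  hcont.div (by fun_prop) fun _ ht ↦ norm_pos_iff.1 (hz.norm_sub_pos hp ht.1)

theorem intervalIntegrable_div_ray_sub (hs : 0 < s)
    (hcont : ContinuousOn (fun t : ℝ ↦ f (t * p)) (Ioc 0 1))
    (hdecay : ∀ t ∈ Ioc (0 : ℝ) 1, ‖f (t * p)‖ ≤ c * (t * ‖p‖) ^ s) (hp : p ≠ 0)
    (hz : RaySeparated K p z) :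
    IntervalIntegrable (fun t : ℝ ↦ f (t * p) / (t * p - z) * p) volume 0 1 := by
  refine intervalIntegrable_ray (h := fun x ↦ f x / (x - z)) (C := K * c) hs
    (continuousOn_div_ray_sub hcont hp hz) fun t ht ↦ ?_
  have hK := hz.nonneg hp
  have hx : 0 < t * ‖p‖ := mul_pos ht.1 (norm_pos_iff.2 hp)
  calc ‖f (t * p) / (t * p - z)‖ ≤ K * ‖f (t * p)‖ / (t * ‖p‖ + ‖z‖) :=
        hz.norm_div_sub_le hp ht.1 _
    _ ≤ K * ‖f (t * p)‖ / (t * ‖p‖) := by gcongr; linarith [norm_nonneg z]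
    _ ≤ K * (c * (t * ‖p‖) ^ s) / (t * ‖p‖) := by gcongr; exact hdecay t ht
    _ = K * c * ‖(t : ℂ) * p‖ ^ (s - 1) := by
        rw [norm_mul, Complex.norm_of_nonneg ht.1.le, rpow_sub_one hx.ne']
        ring

theorem norm_segCauchy_zero_left_le (hM : ∀ t ∈ Ioc (0 : ℝ) 1, ‖f (t * p)‖ ≤ M) (hp : p ≠ 0)
    (hz : RaySeparated K p z) (hz0 : z ≠ 0) :
    ‖segCauchy f 0 p z‖ ≤ K * M * ‖p‖ / ‖z‖ := by
  have hK := hz.nonneg hp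
  have hbound : ∀ t ∈ uIoc (0 : ℝ) 1, ‖f (t * p) / (t * p - z) * p‖ ≤ K * M * ‖p‖ / ‖z‖ := by
    intro t ht
    rw [uIoc_of_le zero_le_one] at ht
    have ht0 := ht.1
    calc ‖f (t * p) / (t * p - z) * p‖ ≤ K * ‖f (t * p)‖ / (t * ‖p‖ + ‖z‖) * ‖p‖ := by
          rw [norm_mul]
          gcongr
          exact hz.norm_div_sub_le hp ht0 _
      _ ≤ K * M / ‖z‖ * ‖p‖ := by
          have hfM := hM t ht
          have hM0 := (norm_nonneg _).trans hfM
          gcongr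
          exact le_add_of_nonneg_left (by positivity)
      _ = K * M * ‖p‖ / ‖z‖ := by ring
  simpa [segCauchy_zero_left] using norm_integral_le_of_norm_le_const hbound

theorem segCauchy_zero_left_sub
    (hz_int : IntervalIntegrable (fun t : ℝ ↦ f (t * p) / (t * p - z) * p) volume 0 1)
    (hw_int : IntervalIntegrable (fun t : ℝ ↦ f (t * p) / (t * p - w) * p) volume 0 1)
    (hp : p ≠ 0) (hz : RaySeparated K p z) (hw : RaySeparated K p w) :
    segCauchy f 0 p z - segCauchy f 0 p w =
      ∫ t in (0 : ℝ)..1, f (t * p) / (t * p - z) * ((z - w) / (t * p - w)) * p := by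
  rw [segCauchy_zero_left, segCauchy_zero_left, ← intervalIntegral.integral_sub hz_int hw_int]
  refine intervalIntegral.integral_congr_ae (.of_forall fun t ht ↦ ?_)
  rw [uIoc_of_le zero_le_one] at ht
  have hz_ne := norm_pos_iff.1 (hz.norm_sub_pos hp ht.1)
  have hw_ne := norm_pos_iff.1 (hw.norm_sub_pos hp ht.1)
  field_simp
  ring

theorem norm_segCauchy_zero_left_sub_le
    (hz_int : IntervalIntegrable (fun t : ℝ ↦ f (t * p) / (t * p - z) * p) volume 0 1)
    (hw_int : IntervalIntegrable (fun t : ℝ ↦ f (t * p) / (t * p - w) * p) volume 0 1)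
    (hM : ∀ t ∈ Ioc (0 : ℝ) 1, ‖f (t * p)‖ ≤ M) (hp : p ≠ 0)
    (hz : RaySeparated K p z) (hw : RaySeparated K p w) (hz0 : z ≠ 0) (hzw : ‖w‖ = ‖z‖) :
    ‖segCauchy f 0 p z - segCauchy f 0 p w‖ ≤ 2 * K ^ 2 * M := by
  have hM0 : 0 ≤ M := (norm_nonneg _).trans (hM 1 ⟨one_pos, le_rfl⟩)
  have hρ : 0 < ‖z‖ := norm_pos_iff.2 hz0
  have hdist : ‖z - w‖ ≤ 2 * ‖z‖ := by linarith [norm_sub_le z w]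
  have hbound : ∀ t ∈ Ioc (0 : ℝ) 1, ‖f (t * p) / (t * p - z) * ((z - w) / (t * p - w)) * p‖ ≤
      2 * K ^ 2 * M * ‖z‖ * (‖p‖ / (t * ‖p‖ + ‖z‖) ^ 2) := by
    intro t ht
    have ht0 := ht.1
    calc ‖f (t * p) / (t * p - z) * ((z - w) / (t * p - w)) * p‖
        ≤ K ^ 2 * ‖f (t * p)‖ * ‖z - w‖ / ((t * ‖p‖ + ‖z‖) * (t * ‖p‖ + ‖z‖)) * ‖p‖ := by
          rw [norm_mul]
          gcongr
          simpa only [hzw] using hz.norm_div_sub_mul_div_sub_le hw hp ht0 (f (t * p)) (z - w)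
      _ ≤ K ^ 2 * M * (2 * ‖z‖) / ((t * ‖p‖ + ‖z‖) * (t * ‖p‖ + ‖z‖)) * ‖p‖ := by
          gcongr
          exact hM t ht
      _ = 2 * K ^ 2 * M * ‖z‖ * (‖p‖ / (t * ‖p‖ + ‖z‖) ^ 2) := by ring
  rw [segCauchy_zero_left_sub hz_int hw_int hp hz hw]
  calc _ ≤ ∫ t in (0 : ℝ)..1, 2 * K ^ 2 * M * ‖z‖ * (‖p‖ / (t * ‖p‖ + ‖z‖) ^ 2) :=
        norm_integral_le_of_norm_le zero_le_one (.of_forall hbound)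
          ((intervalIntegrable_div_mul_add_sq (norm_nonneg p) hρ).const_mul _)
    _ ≤ 2 * K ^ 2 * M * ‖z‖ * (1 / ‖z‖) := by
        rw [intervalIntegral.integral_const_mul]
        gcongr
        exact integral_div_mul_add_sq_le (norm_nonneg p) hρ
    _ = 2 * K ^ 2 * M := by field_simp

theorem norm_div_ray_sub_mul_div_ray_le {s' t : ℝ} (hs'₀ : 0 ≤ s') (hs'₁ : s' ≤ 1) (ht : 0 < t)
    (hdecay : ‖f (t * p)‖ ≤ c * (t * ‖p‖) ^ s) (hp : p ≠ 0)
    (hz : RaySeparated K p z) (h0 : RaySeparated K p 0) :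
    ‖f (t * p) / (t * p - z) * (z / (t * p - 0)) * p‖ ≤
      K ^ 2 * c * ‖p‖ ^ (s - s') * ‖z‖ ^ s' * t ^ (s - s' - 1) := by
  have hr : 0 < ‖p‖ := norm_pos_iff.2 hp
  have hx : 0 < t * ‖p‖ := mul_pos ht hr
  have hkernel := div_add_le_rpow_div_rpow (norm_nonneg z) hx hs'₀ hs'₁
  calc ‖f (t * p) / (t * p - z) * (z / (t * p - 0)) * p‖
      ≤ K ^ 2 * ‖f (t * p)‖ * ‖z‖ / ((t * ‖p‖ + ‖z‖) * (t * ‖p‖ + ‖(0 : ℂ)‖)) * ‖p‖ := by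
        rw [norm_mul]
        gcongr
        exact hz.norm_div_sub_mul_div_sub_le h0 hp ht _ _
    _ = K ^ 2 / t * (‖f (t * p)‖ * (‖z‖ / (t * ‖p‖ + ‖z‖))) := by
        rw [norm_zero, add_zero]
        field_simp
    _ ≤ K ^ 2 / t * (c * (t * ‖p‖) ^ s * (‖z‖ ^ s' / (t * ‖p‖) ^ s')) := by
        refine mul_le_mul_of_nonneg_left ?_ (by positivity)
        exact mul_le_mul hdecay hkernel (by positivity) ((norm_nonneg _).trans hdecay)
    _ = K ^ 2 * c * ‖z‖ ^ s' * (t * ‖p‖) ^ (s - s') / t := by rw [rpow_sub hx]; ring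
    _ = K ^ 2 * c * ‖p‖ ^ (s - s') * ‖z‖ ^ s' * t ^ (s - s' - 1) := by
        rw [mul_rpow ht.le hr.le, rpow_sub_one ht.ne']
        ring

theorem norm_segCauchy_zero_left_sub_zero_le {s' : ℝ} (hs'₀ : 0 ≤ s') (hs'₁ : s' ≤ 1)
    (hs's : s' < s) (hcont : ContinuousOn (fun t : ℝ ↦ f (t * p)) (Ioc 0 1))
    (hdecay : ∀ t ∈ Ioc (0 : ℝ) 1, ‖f (t * p)‖ ≤ c * (t * ‖p‖) ^ s) (hp : p ≠ 0)
    (hz : RaySeparated K p z) (h0 : RaySeparated K p 0) :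
    ‖segCauchy f 0 p z - segCauchy f 0 p 0‖ ≤
      K ^ 2 * c * ‖p‖ ^ (s - s') / (s - s') * ‖z‖ ^ s' := by
  have hs : 0 < s := hs'₀.trans_lt hs's
  rw [segCauchy_zero_left_sub (intervalIntegrable_div_ray_sub hs hcont hdecay hp hz)
    (intervalIntegrable_div_ray_sub hs hcont hdecay hp h0) hp hz h0, sub_zero]
  calc _ ≤ ∫ t in (0 : ℝ)..1, K ^ 2 * c * ‖p‖ ^ (s - s') * ‖z‖ ^ s' * t ^ (s - s' - 1) :=
        norm_integral_le_of_norm_le zero_le_one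
          (.of_forall fun t ht ↦
            norm_div_ray_sub_mul_div_ray_le hs'₀ hs'₁ ht.1 (hdecay t ht) hp hz h0)
          ((intervalIntegrable_rpow' (by linarith)).const_mul _)
    _ = K ^ 2 * c * ‖p‖ ^ (s - s') / (s - s') * ‖z‖ ^ s' := by
        rw [intervalIntegral.integral_const_mul, integral_rpow (.inl (by linarith)),
          sub_add_cancel, one_rpow, zero_rpow (sub_pos.2 hs's).ne']
        ring

theorem differentiableAt_segCauchy_zero_left
    (hcont : ContinuousOn (fun t : ℝ ↦ f (t * p)) (Ioc 0 1))
    (hM : ∀ t ∈ Ioc (0 : ℝ) 1, ‖f (t * p)‖ ≤ M) (hp : p ≠ 0)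
    (hz : RaySeparated K p z) (hz0 : z ≠ 0) : DifferentiableAt ℂ (segCauchy f 0 p) z := by
  have hint : IntegrableOn (fun t : ℝ ↦ f (t * p) * p) (Ioc 0 1) := by
    refine Integrable.mono' (g := fun _ ↦ M * ‖p‖) (integrable_const _)
      ((hcont.mul continuousOn_const).aestronglyMeasurable measurableSet_Ioc)
      ((ae_restrict_iff' measurableSet_Ioc).2 (.of_forall fun t ht ↦ ?_))
    rw [norm_mul]
    gcongr
    exact hM t ht
  have hρ : 0 < ‖z‖ := norm_pos_iff.2 hz0
  have hdist : ∀ t : ℝ, 0 < t → ‖z‖ ≤ K * ‖(t : ℂ) * p - z‖ := fun t ht ↦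
    (le_add_of_nonneg_left (by positivity)).trans (hz t ht)
  have hK : 0 < K := pos_of_mul_pos_left (hρ.trans_le (hdist 1 one_pos)) (norm_nonneg _)
  have hseg : segCauchy f 0 p = fun w ↦ ∫ t in Ioc (0 : ℝ) 1, f (t * p) * p / (t * p - w) := by
    ext w
    rw [segCauchy_zero_left, integral_of_le zero_le_one]
    simp only [div_mul_eq_mul_div]
  rw [hseg]
  refine differentiableAt_integral_div_sub hint (by fun_prop) (div_pos hρ hK)
    ((ae_restrict_iff' measurableSet_Ioc).2 (.of_forall fun t ht ↦ ?_))
  exact (div_le_iff₀' hK).2 (hdist t ht.1)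

end SegCauchy

section ReflStolz

variable {γ : ℝ} {z : ℂ}

theorem reflStolz_eq_singleton_sub (γ : ℝ) : reflStolz γ = {1} - stolzDomain γ :=
  singleton_sub.symm

theorem isOpen_reflStolz (γ : ℝ) : IsOpen (reflStolz γ) := by
  rw [reflStolz_eq_singleton_sub]
  exact isOpen_interior.sub_left

theorem convex_reflStolz (γ : ℝ) : Convex ℝ (reflStolz γ) := by
  rw [reflStolz_eq_singleton_sub]
  exact (convex_singleton 1).sub (convex_convexHull ℝ _).interior

theorem ball_subset_stolzDomain (γ : ℝ) : Metric.ball 0 (Real.sin γ) ⊆ stolzDomain γ :=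
  interior_maximal (Metric.ball_subset_closedBall.trans
    (subset_union_right.trans (subset_convexHull ℝ _))) Metric.isOpen_ball

theorem mem_reflStolz_of_norm_one_sub_lt (hz : ‖1 - z‖ < Real.sin γ) : z ∈ reflStolz γ :=
  ⟨1 - z, ball_subset_stolzDomain γ (mem_ball_zero_iff.2 hz), sub_sub_cancel 1 z⟩

theorem zero_mem_closure_reflStolz (hγ : 0 < Real.sin γ) : 0 ∈ closure (reflStolz γ) := by
  have hne : (stolzDomain γ).Nonempty :=
    ⟨0, ball_subset_stolzDomain γ (Metric.mem_ball_self hγ)⟩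
  have hone : (1 : ℂ) ∈ closure (stolzDomain γ) := by
    rw [stolzDomain,
      (convex_convexHull ℝ _).closure_interior_eq_closure_of_nonempty_interior hne]
    exact subset_closure (subset_convexHull ℝ _ (.inl rfl))
  simpa using! image_closure_subset_closure_image (continuous_const.sub continuous_id)
    (mem_image_of_mem (fun z : ℂ ↦ 1 - z) hone)

theorem reflStolz_subset_ball (γ : ℝ) : reflStolz γ ⊆ Metric.ball 1 1 := by
  have hstolz : stolzDomain γ ⊆ Metric.ball 0 1 := by
    rw [← interior_closedBall _ one_ne_zero]
    refine interior_mono (convexHull_min (union_subset ?_ ?_) (convex_closedBall 0 1))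
    · simp
    · exact Metric.closedBall_subset_closedBall (Real.sin_le_one γ)
  rintro _ ⟨w, hw, rfl⟩
  simpa [dist_eq_norm] using hstolz hw

theorem re_pos_of_mem_reflStolz (hz : z ∈ reflStolz γ) : 0 < z.re := by
  have hball := (abs_re_le_norm (z - 1)).trans_lt (mem_ball_iff_norm.1 (reflStolz_subset_ball γ hz))
  rw [sub_re, one_re] at hball
  linarith [(abs_lt.1 hball).1]

theorem ne_zero_of_mem_reflStolz (hz : z ∈ reflStolz γ) : z ≠ 0 := fun h ↦
  (re_pos_of_mem_reflStolz hz).ne' (h ▸ zero_re)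

theorem norm_le_two_of_mem_reflStolz (hz : z ∈ reflStolz γ) : ‖z‖ ≤ 2 := by
  have hball := mem_ball_iff_norm.1 (reflStolz_subset_ball γ hz)
  have htri := norm_le_norm_sub_add z 1
  rw [norm_one] at htri
  linarith

theorem ofReal_mul_mem_reflStolz (hγ : 0 < Real.sin γ) (hz : z ∈ reflStolz γ) {t : ℝ}
    (ht : t ∈ Ioc (0 : ℝ) 1) : (t : ℂ) * z ∈ reflStolz γ :=
  ofReal_mul_mem_of_zero_mem_closure (isOpen_reflStolz γ) (convex_reflStolz γ)
    (zero_mem_closure_reflStolz hγ) hz ht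

end ReflStolz

/-- The endpoint `cos b * exp (I * b)` of the contours: it lies on the ray of argument `b` and on
the circle of centre `1` and radius `|sin b|`. The two endpoints of `Γ₁` and `Γ₂` are
`contourEndpoint β` and `contourEndpoint (-β)`. -/
noncomputable def contourEndpoint (b : ℝ) : ℂ := Real.cos b * Complex.exp (I * b)

section ContourEndpoint

variable {b γ : ℝ}

theorem contourEndpoint_eq_circleMap (b : ℝ) :
    contourEndpoint b = circleMap 1 (Real.sin b) (π / 2 + b) := by
  rw [contourEndpoint, circleMap, mul_comm I, exp_mul_I, exp_mul_I, ← ofReal_cos, ← ofReal_cos,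
    ← ofReal_sin, ← ofReal_sin, add_comm (π / 2), Real.cos_add_pi_div_two,
    Real.sin_add_pi_div_two]
  have hcos : (Real.cos b : ℂ) ^ 2 = 1 - (Real.sin b : ℂ) ^ 2 := mod_cast Real.cos_sq' b
  push_cast at hcos ⊢
  linear_combination hcos

theorem contourEndpoint_neg_eq_circleMap (b : ℝ) :
    contourEndpoint (-b) = circleMap 1 (Real.sin b) (-(π / 2 + b)) := by
  rw [contourEndpoint_eq_circleMap, circleMap, circleMap, Real.sin_neg,
    show π / 2 + -b = -(π / 2 + b) + π by ring, ofReal_add (-(π / 2 + b)), add_mul, Complex.exp_add,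
    exp_pi_mul_I]
  push_cast
  ring

theorem norm_contourEndpoint (b : ℝ) : ‖contourEndpoint b‖ = |Real.cos b| := by
  rw [contourEndpoint, norm_mul, mul_comm I, norm_exp_ofReal_mul_I, mul_one, norm_real,
    Real.norm_eq_abs]

theorem norm_contourEndpoint_le_one (b : ℝ) : ‖contourEndpoint b‖ ≤ 1 :=
  (norm_contourEndpoint b).trans_le (abs_cos_le_one b)

theorem circleMap_one_mem_reflStolz {r : ℝ} (hr : |r| < Real.sin γ) (t : ℝ) :
    circleMap 1 r t ∈ reflStolz γ := by
  refine mem_reflStolz_of_norm_one_sub_lt ?_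
  rwa [norm_sub_rev, circleMap_sub_center, norm_circleMap_zero]

theorem contourEndpoint_mem_reflStolz (hb : |Real.sin b| < Real.sin γ) :
    contourEndpoint b ∈ reflStolz γ :=
  contourEndpoint_eq_circleMap b ▸ circleMap_one_mem_reflStolz hb _

theorem abs_sin_lt_sin_of_abs_lt (hb : |b| < γ) (hγ : γ ≤ π / 2) : |Real.sin b| < Real.sin γ := by
  have hb' := abs_lt.1 hb
  refine abs_lt.2 ⟨?_, Real.sin_lt_sin_of_lt_of_le_pi_div_two (by linarith) hγ hb'.2⟩
  rw [← Real.sin_neg]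
  exact Real.sin_lt_sin_of_lt_of_le_pi_div_two (by linarith) (by linarith) hb'.1

end ContourEndpoint

section Separation

variable {b θ ρ σ : ℝ} {a p z : ℂ}

theorem sin_abs_sub_le_abs_sin_sub {x y : ℝ} (hx : |x| ≤ θ) (hθy : θ ≤ |y|) (hy : |y| ≤ π / 2) :
    Real.sin (|y| - θ) ≤ |Real.sin (x - y)| := by
  have hlower : |y| - |x| ≤ |x - y| := abs_sub_comm x y ▸ abs_sub_abs_le_abs_sub y x
  calc Real.sin (|y| - θ) ≤ Real.sin |x - y| :=
        sin_le_sin_of_le_of_le_pi_sub (by linarith [pi_pos]) (by linarith)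
          (by linarith [abs_sub x y])
    _ ≤ |Real.sin (x - y)| := by
        rcases abs_choice (x - y) with h | h <;> rw [h]
        · exact le_abs_self _
        · exact Real.sin_neg (x - y) ▸ neg_le_abs _

theorem norm_mul_abs_sin_le_norm_sub (r b : ℝ) (z : ℂ) :
    ‖z‖ * |Real.sin (z.arg - b)| ≤ ‖(r : ℂ) * Complex.exp (I * b) - z‖ := by
  have hrotate : (r - ‖z‖ * Complex.exp ((z.arg - b : ℝ) * I)) * Complex.exp (b * I) =
      r * Complex.exp (I * b) - z := by
    rw [sub_mul, mul_assoc, ← Complex.exp_add, mul_comm I, ofReal_sub, sub_mul, sub_add_cancel,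
      norm_mul_exp_arg_mul_I]
  rw [← hrotate, norm_mul, norm_exp_ofReal_mul_I, mul_one]
  refine le_trans (le_of_eq ?_) (abs_im_le_norm _)
  rw [sub_im, ofReal_im, im_ofReal_mul, exp_ofReal_mul_I_im, zero_sub, abs_neg, abs_mul, abs_norm]

theorem norm_le_norm_add_ofReal (ha : 0 ≤ a.re) (hρ : 0 ≤ ρ) : ‖a‖ ≤ ‖a + ρ‖ :=
  norm_le_norm_add_of_inner_nonneg (by simpa [Complex.inner] using mul_nonneg hρ ha)

theorem le_norm_add_ofReal (ha : 0 ≤ a.re) : ρ ≤ ‖a + ρ‖ := by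
  refine le_trans ?_ (re_le_norm _)
  simpa using ha

theorem raySeparated_contourEndpoint (hz : z ∈ sector θ) (hθb : θ < |b|) (hb : |b| ≤ π / 2) :
    RaySeparated (1 + 2 / Real.sin (|b| - θ)) (contourEndpoint b) z := by
  have hθ : 0 < θ := (abs_nonneg _).trans_lt hz.2
  refine .of_mul_norm_le
    (Real.sin_pos_of_pos_of_lt_pi (sub_pos.2 hθb) (by linarith [pi_pos])) fun t _ ↦ ?_
  calc Real.sin (|b| - θ) * ‖z‖ ≤ ‖z‖ * |Real.sin (z.arg - b)| := by
        rw [mul_comm]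
        gcongr
        exact sin_abs_sub_le_abs_sin_sub hz.2.le hθb.le hb
    _ ≤ ‖(t : ℂ) * contourEndpoint b - z‖ := by
        simpa [contourEndpoint, mul_assoc] using norm_mul_abs_sin_le_norm_sub (t * Real.cos b) b z

theorem raySeparated_neg_ofReal (hp : 0 ≤ p.re) (hρ : 0 ≤ ρ) (hσ₀ : 0 < σ) (hσ₁ : σ ≤ 1) :
    RaySeparated (1 + 2 / σ) p (-ρ) := by
  refine .of_mul_norm_le hσ₀ fun t ht ↦ ?_
  rw [sub_neg_eq_add, norm_neg, Complex.norm_of_nonneg hρ]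
  refine (mul_le_of_le_one_left hρ hσ₁).trans (le_norm_add_ofReal ?_)
  rw [re_ofReal_mul]
  positivity

theorem re_nonneg_of_mem_sector (hz : z ∈ sector θ) (hθ : θ ≤ π / 2) : 0 ≤ z.re :=
  abs_arg_le_pi_div_two_iff.1 (hz.2.le.trans hθ)

end Separation

theorem integral_comp_circleMap_eq_sub {h H : ℂ → ℂ} {ζ : ℂ} {r : ℝ} (a b : ℝ)
    (hcont : Continuous fun t ↦ h (circleMap ζ r t))
    (hH : ∀ t, HasDerivAt H (h (circleMap ζ r t)) (circleMap ζ r t)) :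
    ∫ t in a..b, h (circleMap ζ r t) * (circleMap 0 r t * I) =
      H (circleMap ζ r b) - H (circleMap ζ r a) :=
  intervalIntegral.integral_eq_sub_of_hasDerivAt
    (fun t _ ↦ (hH t).comp t (hasDerivAt_circleMap ζ r t))
    ((hcont.mul ((continuous_circleMap 0 r).mul continuous_const)).intervalIntegrable a b)

theorem norm_one_div_two_pi_I : ‖1 / (2 * π * I : ℂ)‖ = 1 / (2 * π) := by
  simp [abs_of_pos pi_pos]

theorem norm_one_div_two_pi_I_mul_sub_le {a b : ℂ} {D : ℝ} (ha : ‖a‖ ≤ D) (hb : ‖b‖ ≤ D) :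
    ‖1 / (2 * π * I) * (a - b)‖ ≤ D := by
  have hD : 0 ≤ D := (norm_nonneg a).trans ha
  calc ‖1 / (2 * π * I) * (a - b)‖ ≤ 1 / (2 * π) * (D + D) := by
        rw [norm_mul, norm_one_div_two_pi_I]
        gcongr
        exact (norm_sub_le a b).trans (add_le_add ha hb)
    _ = D / π := by field_simp; ring
    _ ≤ D := div_le_self hD (by linarith [pi_gt_three])

/-- The point `z` is quantitatively apart from the rays that carry the two segments of `Γ₁`. -/
def ContourSeparated (K β : ℝ) (z : ℂ) : Prop :=
  RaySeparated K (contourEndpoint β) z ∧ RaySeparated K (contourEndpoint (-β)) z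

section Contour

variable {f : ℂ → ℂ} {K M c s s' β γ θ ρ : ℝ} {p w z : ℂ}

theorem contourSeparated_of_mem_sector (hz : z ∈ sector θ) (hθβ : θ < β) (hβ : β ≤ π / 2) :
    ContourSeparated (1 + 2 / Real.sin (β - θ)) β z := by
  have habs : |β| = β := abs_of_pos (((abs_nonneg _).trans_lt hz.2).trans hθβ)
  constructor
  · simpa only [habs] using raySeparated_contourEndpoint (b := β) hz (by rwa [habs]) (by rwa [habs])
  · simpa only [abs_neg, habs] using raySeparated_contourEndpoint (b := -β) hz
      (by rwa [abs_neg, habs]) (by rwa [abs_neg, habs])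

theorem contourEndpoint_neg_mem_reflStolz (hβγ : |Real.sin β| < Real.sin γ) :
    contourEndpoint (-β) ∈ reflStolz γ :=
  contourEndpoint_mem_reflStolz (by rwa [Real.sin_neg, abs_neg])

theorem contourSeparated_neg_ofReal {σ : ℝ} (hβγ : |Real.sin β| < Real.sin γ) (hρ : 0 ≤ ρ)
    (hσ₀ : 0 < σ) (hσ₁ : σ ≤ 1) : ContourSeparated (1 + 2 / σ) β (-ρ) :=
  ⟨raySeparated_neg_ofReal (re_pos_of_mem_reflStolz (contourEndpoint_mem_reflStolz hβγ)).le
      hρ hσ₀ hσ₁,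
    raySeparated_neg_ofReal (re_pos_of_mem_reflStolz (contourEndpoint_neg_mem_reflStolz hβγ)).le
      hρ hσ₀ hσ₁⟩

theorem continuousOn_comp_ray (hf : ContinuousOn f (reflStolz γ)) (hγ : 0 < Real.sin γ)
    (hp : p ∈ reflStolz γ) : ContinuousOn (fun t : ℝ ↦ f (t * p)) (Ioc 0 1) :=
  hf.comp (by fun_prop) fun _ ht ↦ ofReal_mul_mem_reflStolz hγ hp ht

theorem norm_comp_ray_le (hdecay : ∀ z ∈ reflStolz γ, ‖f z‖ ≤ c * ‖z‖ ^ s) (hγ : 0 < Real.sin γ)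
    (hp : p ∈ reflStolz γ) : ∀ t ∈ Ioc (0 : ℝ) 1, ‖f (t * p)‖ ≤ c * (t * ‖p‖) ^ s := by
  intro t ht
  simpa [abs_of_pos ht.1] using hdecay _ (ofReal_mul_mem_reflStolz hγ hp ht)

theorem F₁_eq (β : ℝ) (f : ℂ → ℂ) (z : ℂ) :
    F₁ β f z = 1 / (2 * π * I) *
      (segCauchy f 0 (contourEndpoint (-β)) z - segCauchy f 0 (contourEndpoint β) z) := by
  rw [F₁, segCauchy_symm f 0, contourEndpoint, contourEndpoint, Real.cos_neg, ofReal_neg, mul_neg]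
  ring

theorem F₂_eq (β : ℝ) (f : ℂ → ℂ) (z : ℂ) :
    F₂ β f z = 1 / (2 * π * I) * ∫ t in -(π / 2 + β)..(π / 2 + β),
      f (circleMap 1 (Real.sin β) t) / (circleMap 1 (Real.sin β) t - z) *
        (circleMap 0 (Real.sin β) t * I) := by
  simp only [F₂, circleMap, zero_add, mul_comm I, mul_right_comm]

theorem norm_F₁_le (hM : ∀ z ∈ reflStolz γ, ‖f z‖ ≤ M) (hβγ : |Real.sin β| < Real.sin γ)
    (hz : ContourSeparated K β z) (hz0 : z ≠ 0) : ‖F₁ β f z‖ ≤ K * M / ‖z‖ := by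
  have hγ := (abs_nonneg _).trans_lt hβγ
  have hray : ∀ b, contourEndpoint b ∈ reflStolz γ → RaySeparated K (contourEndpoint b) z →
      ‖segCauchy f 0 (contourEndpoint b) z‖ ≤ K * M / ‖z‖ := by
    intro b hb hsep
    have hb0 := ne_zero_of_mem_reflStolz hb
    have hKM : 0 ≤ K * M := mul_nonneg (hsep.nonneg hb0) ((norm_nonneg _).trans (hM _ hb))
    refine (norm_segCauchy_zero_left_le
      (fun t ht ↦ hM _ (ofReal_mul_mem_reflStolz hγ hb ht)) hb0 hsep hz0).trans ?_
    exact div_le_div_of_nonneg_right (mul_le_of_le_one_right hKM (norm_contourEndpoint_le_one b))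
      (norm_nonneg z)
  rw [F₁_eq]
  exact norm_one_div_two_pi_I_mul_sub_le (hray _ (contourEndpoint_neg_mem_reflStolz hβγ) hz.2)
    (hray _ (contourEndpoint_mem_reflStolz hβγ) hz.1)

theorem norm_F₁_sub_le_of_endpoints {D : ℝ}
    (hpos : ‖segCauchy f 0 (contourEndpoint β) z - segCauchy f 0 (contourEndpoint β) w‖ ≤ D)
    (hneg : ‖segCauchy f 0 (contourEndpoint (-β)) z - segCauchy f 0 (contourEndpoint (-β)) w‖ ≤ D) :
    ‖F₁ β f z - F₁ β f w‖ ≤ D := by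
  rw [F₁_eq, F₁_eq, ← mul_sub, sub_sub_sub_comm]
  exact norm_one_div_two_pi_I_mul_sub_le hneg hpos

theorem norm_F₁_sub_le (hs : 0 < s) (hf : ContinuousOn f (reflStolz γ))
    (hdecay : ∀ z ∈ reflStolz γ, ‖f z‖ ≤ c * ‖z‖ ^ s) (hM : ∀ z ∈ reflStolz γ, ‖f z‖ ≤ M)
    (hβγ : |Real.sin β| < Real.sin γ) (hz : ContourSeparated K β z) (hw : ContourSeparated K β w)
    (hz0 : z ≠ 0) (hzw : ‖w‖ = ‖z‖) : ‖F₁ β f z - F₁ β f w‖ ≤ 2 * K ^ 2 * M := by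
  have hγ := (abs_nonneg _).trans_lt hβγ
  have hray : ∀ p ∈ reflStolz γ, RaySeparated K p z → RaySeparated K p w →
      ‖segCauchy f 0 p z - segCauchy f 0 p w‖ ≤ 2 * K ^ 2 * M := by
    intro p hp hpz hpw
    have hp0 := ne_zero_of_mem_reflStolz hp
    have hint : ∀ x, RaySeparated K p x → IntervalIntegrable _ volume 0 1 := fun x hx ↦
      intervalIntegrable_div_ray_sub hs (continuousOn_comp_ray hf hγ hp)
        (norm_comp_ray_le hdecay hγ hp) hp0 hx
    exact norm_segCauchy_zero_left_sub_le (hint z hpz) (hint w hpw)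
      (fun t ht ↦ hM _ (ofReal_mul_mem_reflStolz hγ hp ht)) hp0 hpz hpw hz0 hzw
  exact norm_F₁_sub_le_of_endpoints (hray _ (contourEndpoint_mem_reflStolz hβγ) hz.1 hw.1)
    (hray _ (contourEndpoint_neg_mem_reflStolz hβγ) hz.2 hw.2)

theorem norm_F₁_sub_zero_le (hs'₀ : 0 ≤ s') (hs'₁ : s' ≤ 1) (hs's : s' < s)
    (hf : ContinuousOn f (reflStolz γ)) (hdecay : ∀ z ∈ reflStolz γ, ‖f z‖ ≤ c * ‖z‖ ^ s)
    (hβγ : |Real.sin β| < Real.sin γ) (hz : ContourSeparated K β z)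
    (h0 : ContourSeparated K β 0) :
    ‖F₁ β f z - F₁ β f 0‖ ≤ K ^ 2 * c / (s - s') * ‖z‖ ^ s' := by
  have hγ := (abs_nonneg _).trans_lt hβγ
  have hss' : 0 < s - s' := sub_pos.2 hs's
  have hray : ∀ b, contourEndpoint b ∈ reflStolz γ → RaySeparated K (contourEndpoint b) z →
      RaySeparated K (contourEndpoint b) 0 →
      ‖segCauchy f 0 (contourEndpoint b) z - segCauchy f 0 (contourEndpoint b) 0‖ ≤
        K ^ 2 * c / (s - s') * ‖z‖ ^ s' := by
    intro b hb hbz hb0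
    have hc : 0 ≤ c := nonneg_of_mul_nonneg_left ((norm_nonneg _).trans (hdecay _ hb))
      (rpow_pos_of_pos (norm_pos_iff.2 (ne_zero_of_mem_reflStolz hb)) s)
    have hpow : ‖contourEndpoint b‖ ^ (s - s') ≤ 1 :=
      rpow_le_one (norm_nonneg _) (norm_contourEndpoint_le_one b) hss'.le
    refine (norm_segCauchy_zero_left_sub_zero_le hs'₀ hs'₁ hs's (continuousOn_comp_ray hf hγ hb)
      (norm_comp_ray_le hdecay hγ hb) (ne_zero_of_mem_reflStolz hb) hbz hb0).trans ?_
    refine mul_le_mul_of_nonneg_right (div_le_div_of_nonneg_right ?_ hss'.le) (by positivity)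
    exact mul_le_of_le_one_right (by positivity) hpow
  exact norm_F₁_sub_le_of_endpoints (hray _ (contourEndpoint_mem_reflStolz hβγ) hz.1 h0.1)
    (hray _ (contourEndpoint_neg_mem_reflStolz hβγ) hz.2 h0.2)

theorem differentiableAt_F₁ (hf : ContinuousOn f (reflStolz γ))
    (hM : ∀ z ∈ reflStolz γ, ‖f z‖ ≤ M) (hβγ : |Real.sin β| < Real.sin γ)
    (hz : ContourSeparated K β z) (hz0 : z ≠ 0) : DifferentiableAt ℂ (F₁ β f) z := by
  have hγ := (abs_nonneg _).trans_lt hβγ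
  have hray : ∀ p ∈ reflStolz γ, RaySeparated K p z → DifferentiableAt ℂ (segCauchy f 0 p) z :=
    fun p hp hpz ↦ differentiableAt_segCauchy_zero_left (continuousOn_comp_ray hf hγ hp)
      (fun t ht ↦ hM _ (ofReal_mul_mem_reflStolz hγ hp ht)) (ne_zero_of_mem_reflStolz hp) hpz hz0
  rw [funext (F₁_eq β f)]
  exact ((hray _ (contourEndpoint_neg_mem_reflStolz hβγ) hz.2).sub
    (hray _ (contourEndpoint_mem_reflStolz hβγ) hz.1)).const_mul _

theorem norm_le_norm_sub_neg_of_mem_reflStolz (hz : z ∈ reflStolz γ) (hρ : 0 ≤ ρ) :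
    ‖z‖ ≤ ‖z - -ρ‖ := by
  rw [sub_neg_eq_add]
  exact norm_le_norm_add_ofReal (re_pos_of_mem_reflStolz hz).le hρ

theorem F₁_add_F₂_neg_ofReal (hs : 0 < s) (hf : DifferentiableOn ℂ f (reflStolz γ))
    (hdecay : ∀ z ∈ reflStolz γ, ‖f z‖ ≤ c * ‖z‖ ^ s) (hβγ : |Real.sin β| < Real.sin γ)
    (hρ : 0 ≤ ρ) : F₁ β f (-ρ) + F₂ β f (-ρ) = 0 := by
  have hγ := (abs_nonneg _).trans_lt hβγ
  have hnorm : ∀ a ∈ reflStolz γ, 0 < ‖a‖ := fun a ha ↦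
    norm_pos_iff.2 (ne_zero_of_mem_reflStolz ha)
  have hle : ∀ a ∈ reflStolz γ, ‖a‖ ≤ ‖a - -ρ‖ := fun a ha ↦
    norm_le_norm_sub_neg_of_mem_reflStolz ha hρ
  have hdiff : DifferentiableOn ℂ (fun a ↦ f a / (a - -ρ)) (reflStolz γ) :=
    hf.div (by fun_prop) fun a ha ↦ norm_pos_iff.1 ((hnorm a ha).trans_le (hle a ha))
  have hbound : ∀ a ∈ reflStolz γ, ‖f a / (a - -ρ)‖ ≤ c * ‖a‖ ^ (s - 1) := by
    intro a ha
    have ha0 := hnorm a ha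
    rw [norm_div, rpow_sub_one ha0.ne', ← mul_div_assoc]
    exact div_le_div₀ ((norm_nonneg _).trans (hdecay a ha)) (hdecay a ha) ha0 (hle a ha)
  obtain ⟨H, hH_within⟩ := (convex_reflStolz γ).exists_forall_hasDerivWithinAt hdiff
  have hH : ∀ a ∈ reflStolz γ, HasDerivAt H (f a / (a - -ρ)) a := fun a ha ↦
    (hH_within a ha).hasDerivAt ((isOpen_reflStolz γ).mem_nhds ha)
  have harc := circleMap_one_mem_reflStolz hβγ
  have hF₁ := integral_ray_sub_integral_ray hs (isOpen_reflStolz γ) (convex_reflStolz γ)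
    (zero_mem_closure_reflStolz hγ) (fun h0 ↦ ne_zero_of_mem_reflStolz h0 rfl) hdiff.continuousOn
    hH hbound (contourEndpoint_neg_mem_reflStolz hβγ) (contourEndpoint_mem_reflStolz hβγ)
  have hF₂ := integral_comp_circleMap_eq_sub (h := fun a ↦ f a / (a - -ρ)) (-(π / 2 + β))
    (π / 2 + β) (hdiff.continuousOn.comp_continuous (continuous_circleMap 1 _) harc)
    fun t ↦ hH _ (harc t)
  rw [← contourEndpoint_eq_circleMap, ← contourEndpoint_neg_eq_circleMap] at hF₂
  rw [F₁_eq, F₂_eq, segCauchy_zero_left, segCauchy_zero_left, hF₁, hF₂]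
  ring

theorem norm_F₂_neg_ofReal_le (hM : ∀ z ∈ reflStolz γ, ‖f z‖ ≤ M)
    (hβγ : |Real.sin β| < Real.sin γ) (hβ : |β| ≤ π / 2) (hρ : 0 ≤ ρ) :
    ‖F₂ β f (-ρ)‖ ≤ M / (1 - |Real.sin β|) := by
  have hβ' := abs_le.1 hβ
  have hsin : 0 < 1 - |Real.sin β| := sub_pos.2 (hβγ.trans_le (Real.sin_le_one γ))
  have hpoint : ∀ t, ‖f (circleMap 1 (Real.sin β) t) / (circleMap 1 (Real.sin β) t - -ρ) *
      (circleMap 0 (Real.sin β) t * I)‖ ≤ M / (1 - |Real.sin β|) := by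
    intro t
    have hmem := circleMap_one_mem_reflStolz hβγ t
    have hM0 : 0 ≤ M := (norm_nonneg _).trans (hM _ hmem)
    have hdist : 1 - |Real.sin β| ≤ ‖circleMap 1 (Real.sin β) t‖ := by
      have htri := norm_sub_norm_le (1 : ℂ) (1 - circleMap 1 (Real.sin β) t)
      rwa [sub_sub_cancel, norm_one, norm_sub_rev, circleMap_sub_center,
        norm_circleMap_zero] at htri
    rw [norm_mul, norm_div, norm_mul, norm_circleMap_zero, norm_I, mul_one]
    exact (mul_le_of_le_one_right (by positivity) (abs_sin_le_one β)).trans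
      (div_le_div₀ hM0 (hM _ hmem) hsin
        (hdist.trans (norm_le_norm_sub_neg_of_mem_reflStolz hmem hρ)))
  have hbound0 := (norm_nonneg _).trans (hpoint 0)
  rw [F₂_eq, norm_mul, norm_one_div_two_pi_I, one_div_mul_eq_div, div_le_iff₀ two_pi_pos]
  refine (norm_integral_le_of_norm_le_const fun t _ ↦ hpoint t).trans ?_
  gcongr
  rw [abs_of_nonneg] <;> linarith

end Contour

section GAux

variable {f : ℂ → ℂ} {K M c s s' β γ θ : ℝ} {z : ℂ}

theorem one_le_norm_one_add (hz : 0 ≤ z.re) : 1 ≤ ‖1 + z‖ := by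
  simpa [add_comm] using le_norm_add_ofReal (ρ := 1) hz

theorem norm_le_norm_one_add (hz : 0 ≤ z.re) : ‖z‖ ≤ ‖1 + z‖ := by
  simpa [add_comm] using norm_le_norm_add_ofReal (ρ := 1) hz zero_le_one

theorem norm_div_one_add_le_rpow (hz : 0 ≤ z.re) (hs'₀ : 0 ≤ s') (hs'₁ : s' ≤ 1) :
    ‖z / (1 + z)‖ ≤ ‖z‖ ^ s' := by
  have hone := one_le_norm_one_add hz
  have hle_one : ‖z‖ / ‖1 + z‖ ≤ 1 := div_le_one_of_le₀ (norm_le_norm_one_add hz) (norm_nonneg _)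
  rw [norm_div]
  calc ‖z‖ / ‖1 + z‖ ≤ (‖z‖ / ‖1 + z‖) ^ s' :=
        self_le_rpow_of_le_one (by positivity) hle_one hs'₁
    _ ≤ ‖z‖ ^ s' := by
        gcongr
        exact div_le_self (norm_nonneg z) hone

theorem F₁_zero_eq_neg_F₂_zero (hs : 0 < s) (hf : DifferentiableOn ℂ f (reflStolz γ))
    (hdecay : ∀ z ∈ reflStolz γ, ‖f z‖ ≤ c * ‖z‖ ^ s) (hβγ : |Real.sin β| < Real.sin γ) :
    F₁ β f 0 = -F₂ β f 0 := by
  simpa [add_eq_zero_iff_eq_neg] using F₁_add_F₂_neg_ofReal hs hf hdecay hβγ le_rfl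

theorem norm_F₂_zero_le (hM : ∀ z ∈ reflStolz γ, ‖f z‖ ≤ M)
    (hβγ : |Real.sin β| < Real.sin γ) (hβ : |β| ≤ π / 2) :
    ‖F₂ β f 0‖ ≤ M / (1 - |Real.sin β|) := by
  simpa using norm_F₂_neg_ofReal_le hM hβγ hβ le_rfl

theorem differentiableAt_gAux (hf : ContinuousOn f (reflStolz γ))
    (hM : ∀ z ∈ reflStolz γ, ‖f z‖ ≤ M) (hβγ : |Real.sin β| < Real.sin γ)
    (hz : ContourSeparated K β z) (hz0 : z ≠ 0) (hre : 0 ≤ z.re) :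
    DifferentiableAt ℂ (gAux β f) z :=
  (differentiableAt_F₁ hf hM hβγ hz hz0).add ((differentiableAt_const _).div (by fun_prop)
    (norm_pos_iff.1 (one_pos.trans_le (one_le_norm_one_add hre))))

theorem norm_gAux_le_div_norm (hM : ∀ z ∈ reflStolz γ, ‖f z‖ ≤ M)
    (hβγ : |Real.sin β| < Real.sin γ) (hβ : |β| ≤ π / 2) (hz : ContourSeparated K β z)
    (hz0 : z ≠ 0) (hre : 0 ≤ z.re) :
    ‖gAux β f z‖ ≤ (K * M + M / (1 - |Real.sin β|)) / ‖z‖ := by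
  have hF₂ := norm_F₂_zero_le hM hβγ hβ
  rw [add_div]
  refine norm_add_le_of_le (norm_F₁_le hM hβγ hz hz0) ?_
  rw [norm_div]
  exact div_le_div₀ ((norm_nonneg _).trans hF₂) hF₂ (norm_pos_iff.2 hz0) (norm_le_norm_one_add hre)

theorem norm_gAux_le_rpow (hs'₀ : 0 ≤ s') (hs'₁ : s' ≤ 1) (hs's : s' < s)
    (hf : DifferentiableOn ℂ f (reflStolz γ)) (hdecay : ∀ z ∈ reflStolz γ, ‖f z‖ ≤ c * ‖z‖ ^ s)
    (hM : ∀ z ∈ reflStolz γ, ‖f z‖ ≤ M) (hβγ : |Real.sin β| < Real.sin γ) (hβ : |β| ≤ π / 2)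
    (hz : ContourSeparated K β z) (h0 : ContourSeparated K β 0) (hre : 0 ≤ z.re) :
    ‖gAux β f z‖ ≤ (K ^ 2 * c / (s - s') + M / (1 - |Real.sin β|)) * ‖z‖ ^ s' := by
  have hne : 1 + z ≠ 0 := norm_pos_iff.1 (one_pos.trans_le (one_le_norm_one_add hre))
  have hcauchy := F₁_zero_eq_neg_F₂_zero (hs'₀.trans_lt hs's) hf hdecay hβγ
  have hF₂ := norm_F₂_zero_le hM hβγ hβ
  have hsplit : gAux β f z = (F₁ β f z - F₁ β f 0) - F₂ β f 0 * (z / (1 + z)) := by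
    rw [gAux, hcauchy]
    field_simp
    ring
  rw [hsplit, add_mul]
  refine norm_sub_le_of_le
    (norm_F₁_sub_zero_le hs'₀ hs'₁ hs's hf.continuousOn hdecay hβγ hz h0) ?_
  rw [norm_mul]
  exact mul_le_mul hF₂ (norm_div_one_add_le_rpow hre hs'₀ hs'₁) (norm_nonneg _)
    ((norm_nonneg _).trans hF₂)

theorem norm_gAux_le (hs : 0 < s) (hf : DifferentiableOn ℂ f (reflStolz γ))
    (hdecay : ∀ z ∈ reflStolz γ, ‖f z‖ ≤ c * ‖z‖ ^ s) (hM : ∀ z ∈ reflStolz γ, ‖f z‖ ≤ M)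
    (hβγ : |Real.sin β| < Real.sin γ) (hβ : |β| ≤ π / 2) (hz : ContourSeparated K β z)
    (hmirror : ContourSeparated K β (-‖z‖)) (hz0 : z ≠ 0) (hre : 0 ≤ z.re) :
    ‖gAux β f z‖ ≤ (2 * K ^ 2 + 2 / (1 - |Real.sin β|)) * M := by
  have hcauchy : F₁ β f (-‖z‖) = -F₂ β f (-‖z‖) :=
    eq_neg_of_add_eq_zero_left (F₁_add_F₂_neg_ofReal hs hf hdecay hβγ (norm_nonneg z))
  have hsplit : gAux β f z =
      (F₁ β f z - F₁ β f (-‖z‖)) - F₂ β f (-‖z‖) + F₂ β f 0 / (1 + z) := by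
    rw [gAux, hcauchy]
    ring
  have hF₂ : ‖F₂ β f 0 / (1 + z)‖ ≤ M / (1 - |Real.sin β|) := by
    rw [norm_div]
    exact (div_le_self (norm_nonneg _) (one_le_norm_one_add hre)).trans (norm_F₂_zero_le hM hβγ hβ)
  rw [hsplit]
  calc _ ≤ 2 * K ^ 2 * M + M / (1 - |Real.sin β|) + M / (1 - |Real.sin β|) :=
        norm_add_le_of_le (norm_sub_le_of_le
          (norm_F₁_sub_le hs hf.continuousOn hdecay hM hβγ hz hmirror hz0 (by simp))
          (norm_F₂_neg_ofReal_le hM hβγ hβ (norm_nonneg z))) hF₂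
    _ = (2 * K ^ 2 + 2 / (1 - |Real.sin β|)) * M := by ring

theorem norm_le_mul_two_rpow_of_mem_reflStolz (hc : 0 ≤ c) (hs : 0 ≤ s)
    (hdecay : ∀ z ∈ reflStolz γ, ‖f z‖ ≤ c * ‖z‖ ^ s) :
    ∀ z ∈ reflStolz γ, ‖f z‖ ≤ c * 2 ^ s := fun z hz ↦
  (hdecay z hz).trans (by gcongr; exact norm_le_two_of_mem_reflStolz hz)

theorem exists_norm_gAux_le_rpow_div (hc : 0 < c) (hs : 0 < s)
    (hf : DifferentiableOn ℂ f (reflStolz γ)) (hdecay : ∀ z ∈ reflStolz γ, ‖f z‖ ≤ c * ‖z‖ ^ s)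
    (hβγ : |Real.sin β| < Real.sin γ) (hβ : |β| ≤ π / 2) (hθ : θ ≤ π / 2)
    (hsep : ∀ z ∈ sector θ, ContourSeparated K β z) (h0 : ContourSeparated K β 0) :
    ∃ c₂ > (0 : ℝ), ∃ s' > (0 : ℝ), ∀ z ∈ sector θ,
      ‖gAux β f z‖ ≤ c₂ * ‖z‖ ^ s' / (1 + ‖z‖ ^ (2 * s')) := by
  have hM := norm_le_mul_two_rpow_of_mem_reflStolz hc.le hs.le hdecay
  obtain ⟨s', hs'₀, hs'_lt⟩ := exists_between (lt_min hs one_pos)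
  obtain ⟨hs's, hs'₁⟩ := lt_min_iff.1 hs'_lt
  set A₀ := K ^ 2 * c / (s - s') + c * 2 ^ s / (1 - |Real.sin β|)
  set A₁ := K * (c * 2 ^ s) + c * 2 ^ s / (1 - |Real.sin β|)
  have hA : 0 < max A₀ A₁ := by
    have hsin : 0 < 1 - |Real.sin β| := sub_pos.2 (hβγ.trans_le (Real.sin_le_one γ))
    exact lt_max_of_lt_left (by positivity)
  refine ⟨2 * max A₀ A₁, by positivity, s', hs'₀, fun z hz ↦ ?_⟩
  have hre := re_nonneg_of_mem_sector hz hθ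
  refine le_two_mul_rpow_div_one_add_rpow (norm_pos_iff.2 hz.1) hA.le hs'₀.le hs'₁.le ?_ ?_
  · refine (norm_gAux_le_rpow hs'₀.le hs'₁.le hs's hf hdecay hM hβγ hβ (hsep z hz) h0 hre).trans ?_
    gcongr
    exact le_max_left A₀ A₁
  · refine (norm_gAux_le_div_norm hM hβγ hβ (hsep z hz) hz.1 hre).trans ?_
    gcongr
    exact le_max_right A₀ A₁

end GAux

/-- Single-variable transfer lemma: for `0 < θ < β₁ < γ₁ < π/2` and `f` holomorphic and
bounded on `Δ_{γ₁}` with `|f(z)| ≤ c|z|^s`, the function `g = F₁ + F₂(0)/(1+·)` is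
holomorphic on `Σ_θ`, lies in `H₀^∞(Σ_θ)` (i.e. has the decay
`|g(z)| ≤ c₂|z|^{s'}/(1+|z|^{2s'})`), and `‖g‖_{∞,Σ_θ} ≤ C‖f‖_{∞,Δ_{γ₁}}` with `C`
independent of `f`. -/
theorem stmt5 (θ β₁ γ₁ : ℝ) (h1 : 0 < θ) (h2 : θ < β₁) (h3 : β₁ < γ₁)
    (h4 : γ₁ < Real.pi / 2) :
    ∃ C > (0:ℝ), ∀ f : ℂ → ℂ, DifferentiableOn ℂ f (reflStolz γ₁) →
      ∀ c s : ℝ, 0 < c → 0 < s → (∀ z ∈ reflStolz γ₁, ‖f z‖ ≤ c * ‖z‖ ^ s) →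
        DifferentiableOn ℂ (gAux β₁ f) (sector θ) ∧
        (∃ c₂ > (0:ℝ), ∃ s' > (0:ℝ), ∀ z ∈ sector θ,
          ‖gAux β₁ f z‖ ≤ c₂ * ‖z‖ ^ s' / (1 + ‖z‖ ^ (2 * s'))) ∧
        (∀ M : ℝ, (∀ z ∈ reflStolz γ₁, ‖f z‖ ≤ M) →
          ∀ z ∈ sector θ, ‖gAux β₁ f z‖ ≤ C * M) := by
  have hβγ : |Real.sin β₁| < Real.sin γ₁ :=
    abs_sin_lt_sin_of_abs_lt (by rwa [abs_of_pos (h1.trans h2)]) h4.le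
  have hβ : |β₁| ≤ π / 2 := by rw [abs_of_pos (h1.trans h2)]; linarith
  have hσ : 0 < Real.sin (β₁ - θ) := Real.sin_pos_of_pos_of_lt_pi (by linarith) (by linarith)
  have hsin : 0 < 1 - |Real.sin β₁| := sub_pos.2 (hβγ.trans_le (Real.sin_le_one γ₁))
  set K := 1 + 2 / Real.sin (β₁ - θ)
  have hsep : ∀ z ∈ sector θ, ContourSeparated K β₁ z := fun z hz ↦
    contourSeparated_of_mem_sector hz h2 (by linarith)
  have hmirror : ∀ ρ : ℝ, 0 ≤ ρ → ContourSeparated K β₁ (-ρ) := fun ρ hρ ↦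
    contourSeparated_neg_ofReal hβγ hρ hσ (Real.sin_le_one _)
  have hre : ∀ z ∈ sector θ, 0 ≤ z.re := fun z hz ↦ re_nonneg_of_mem_sector hz (by linarith)
  refine ⟨2 * K ^ 2 + 2 / (1 - |Real.sin β₁|), by positivity,
    fun f hf c s hc hs hdecay ↦ ⟨fun z hz ↦ ?_, ?_, fun M hM z hz ↦ ?_⟩⟩
  · exact (differentiableAt_gAux hf.continuousOn
      (norm_le_mul_two_rpow_of_mem_reflStolz hc.le hs.le hdecay) hβγ (hsep z hz) hz.1
      (hre z hz)).differentiableWithinAt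
  · exact exists_norm_gAux_le_rpow_div hc hs hf hdecay hβγ hβ (by linarith) hsep
      (by simpa using hmirror 0 le_rfl)
  · exact norm_gAux_le hs hf hdecay hM hβγ hβ (hsep z hz) (hmirror _ (norm_nonneg z)) hz.1
      (hre z hz)
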